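/- (Theorem 1, part 3) For every model M and hybrid formula φ: I have a winning strategy for the semantic game G(M, (P : φ)) if and only if M ⊨ φ, i.e., φ is true at every world of M. -/

import Mathlib

/-- Hybrid logic formulas over nominals `ℕ` and propositional variables `ℕ`
(the two sorts are kept disjoint by the constructors). -/
inductive Form : Type where
  | prop : ℕ → Form
  | nom : ℕ → Form
  | rel : ℕ → ℕ → Form
  | and : Form → Form → Form
  | or : Form → Form → Form
  | imp : Form → Form → Form
  | neg : Form → Form
  | at_ : ℕ → Form → Form
  | box : Form → Form
  | dia : Form → Form

/-- A model for hybrid logic: a nonempty set of worlds, an accessibility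
relation, a valuation and an assignment of nominals to worlds. -/
structure Model where
  W : Type
  ne : Nonempty W
  R : W → W → Prop
  V : ℕ → W → Prop
  g : ℕ → W

/-- Satisfaction of a formula at a world of a model. -/
def sat (M : Model) : M.W → Form → Prop
  | w, .prop p => M.V p w
  | w, .nom i => M.g i = w
  | _, .rel i j => M.R (M.g i) (M.g j)
  | w, .and φ ψ => sat M w φ ∧ sat M w ψ
  | w, .or φ ψ => sat M w φ ∨ sat M w ψ
  | w, .imp φ ψ => ¬ sat M w φ ∨ sat M w ψ
  | w, .neg φ => ¬ sat M w φ
  | _, .at_ i φ => sat M (M.g i) φ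
  | w, .box φ => ∀ v, M.R w v → sat M v φ
  | w, .dia φ => ∃ v, M.R w v ∧ sat M v φ

/-- A model is named iff every world has a name, i.e. the assignment is surjective. -/
def Model.Named (M : Model) : Prop := Function.Surjective M.g

/-- A formula is valid iff it is true at every world of every model. -/
def Valid (φ : Form) : Prop := ∀ (M : Model) (w : M.W), sat M w φ

/-- Roles: `pro` means I am the proponent (`P`-state), `opp` that I am the opponent (`O`-state). -/
inductive Role : Type where
  | pro : Role
  | opp : Role

/-- Game states of the semantic game over a model: `loc r w φ` is the state
`Q, w : φ` and `glob r φ` is the state `Q : φ` (with `Q = P` for `r = pro`, `Q = O` for `r = opp`). -/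
inductive GState (M : Model) : Type where
  | loc : Role → M.W → Form → GState M
  | glob : Role → Form → GState M

/-- `IWins M s` holds iff I have a winning strategy for the semantic game `G(M, s)`:
a subtree of the game tree keeping exactly one child of every non-leaf node labelled "I"
(and all children of nodes labelled "Y"), all of whose leaves are labelled "I".
Each constructor corresponds to one game rule: at "I"-nodes I pick one child in which
I have a winning strategy; at "Y"-nodes I must have a winning strategy in every child;
leaves must be labelled "I". -/
inductive IWins (M : Model) : GState M → Prop where
  -- elementary leaves
  | proProp {w p} : M.V p w → IWins M (.loc .pro w (.prop p))
  | oppProp {w p} : ¬ M.V p w → IWins M (.loc .opp w (.prop p))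
  | proNom {w i} : M.g i = w → IWins M (.loc .pro w (.nom i))
  | oppNom {w i} : M.g i ≠ w → IWins M (.loc .opp w (.nom i))
  | proRel {w : M.W} {i j} : M.R (M.g i) (M.g j) → IWins M (.loc .pro w (.rel i j))
  | oppRel {w : M.W} {i j} : ¬ M.R (M.g i) (M.g j) → IWins M (.loc .opp w (.rel i j))
  -- disjunction
  | proOrL {w φ ψ} : IWins M (.loc .pro w φ) → IWins M (.loc .pro w (.or φ ψ))
  | proOrR {w φ ψ} : IWins M (.loc .pro w ψ) → IWins M (.loc .pro w (.or φ ψ))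
  | oppOr {w φ ψ} : IWins M (.loc .opp w φ) → IWins M (.loc .opp w ψ) →
      IWins M (.loc .opp w (.or φ ψ))
  -- conjunction
  | proAnd {w φ ψ} : IWins M (.loc .pro w φ) → IWins M (.loc .pro w ψ) →
      IWins M (.loc .pro w (.and φ ψ))
  | oppAndL {w φ ψ} : IWins M (.loc .opp w φ) → IWins M (.loc .opp w (.and φ ψ))
  | oppAndR {w φ ψ} : IWins M (.loc .opp w ψ) → IWins M (.loc .opp w (.and φ ψ))
  -- implication
  | proImpL {w φ ψ} : IWins M (.loc .opp w φ) → IWins M (.loc .pro w (.imp φ ψ))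
  | proImpR {w φ ψ} : IWins M (.loc .pro w ψ) → IWins M (.loc .pro w (.imp φ ψ))
  | oppImp {w φ ψ} : IWins M (.loc .pro w φ) → IWins M (.loc .opp w ψ) →
      IWins M (.loc .opp w (.imp φ ψ))
  -- negation (role switch)
  | proNeg {w φ} : IWins M (.loc .opp w φ) → IWins M (.loc .pro w (.neg φ))
  | oppNeg {w φ} : IWins M (.loc .pro w φ) → IWins M (.loc .opp w (.neg φ))
  -- @-operator
  | proAt {w i φ} : IWins M (.loc .pro (M.g i) φ) → IWins M (.loc .pro w (.at_ i φ))
  | oppAt {w i φ} : IWins M (.loc .opp (M.g i) φ) → IWins M (.loc .opp w (.at_ i φ))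
  -- box: for `P` a "Y"-node over all successors (a leaf labelled "I" if there are none);
  -- for `O` an "I"-node over all successors (a leaf labelled "Y" if there are none)
  | proBox {w φ} : (∀ v, M.R w v → IWins M (.loc .pro v φ)) → IWins M (.loc .pro w (.box φ))
  | oppBox {w φ} (v) : M.R w v → IWins M (.loc .opp v φ) → IWins M (.loc .opp w (.box φ))
  -- diamond: dual to box
  | proDia {w φ} (v) : M.R w v → IWins M (.loc .pro v φ) → IWins M (.loc .pro w (.dia φ))
  | oppDia {w φ} : (∀ v, M.R w v → IWins M (.loc .opp v φ)) → IWins M (.loc .opp w (.dia φ))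
  -- global states
  | proGlob {φ} : (∀ w, IWins M (.loc .pro w φ)) → IWins M (.glob .pro φ)
  | oppGlob {φ} (w) : IWins M (.loc .opp w φ) → IWins M (.glob .opp φ)

/-!
Each rule of the game mirrors a clause of the definition of truth. A winning strategy therefore
certifies, from its leaves upwards, what the state at its root asserts. Conversely, truth or falsity
of the formula tells me which child to keep at my nodes; since `¬` and `→` exchange the roles, the
proponent and opponent strategies have to be built together, by recursion on the formula.
-/

/-- The assertion carried by a game state: `P, w : φ` asserts that `φ` is true at `w` and
`O, w : φ` that it is false there; `P : φ` asserts that `φ` is true at every world and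
`O : φ` that it is false at some world. These are the states from which I can win. -/
def GState.Holds {M : Model} : GState M → Prop
  | .loc .pro w φ => sat M w φ
  | .loc .opp w φ => ¬ sat M w φ
  | .glob .pro φ => ∀ w, sat M w φ
  | .glob .opp φ => ∃ w, ¬ sat M w φ

section

variable {M : Model}

theorem IWins.holds {s : GState M} : IWins M s → s.Holds
  | .proProp h | .oppProp h | .proNom h | .oppNom h | .proRel h | .oppRel h => h
  | .proOrL h => .inl h.holds
  | .proOrR h => .inr h.holds
  | .oppOr hφ hψ => not_or.2 ⟨hφ.holds, hψ.holds⟩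
  | .proAnd hφ hψ => ⟨hφ.holds, hψ.holds⟩
  | .oppAndL h => not_and_of_not_left _ h.holds
  | .oppAndR h => not_and_of_not_right _ h.holds
  | .proImpL h => .inl h.holds
  | .proImpR h => .inr h.holds
  | .oppImp hφ hψ => not_or.2 ⟨not_not.2 hφ.holds, hψ.holds⟩
  | .proNeg h => h.holds
  | .oppNeg h => not_not.2 h.holds
  | .proAt h => h.holds
  | .oppAt h => h.holds
  | .proBox h => fun v hv => (h v hv).holds
  | .oppBox v hv h => fun hbox => h.holds (hbox v hv)
  | .proDia v hv h => ⟨v, hv, h.holds⟩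
  | .oppDia h => fun ⟨v, hv, hφ⟩ => (h v hv).holds hφ
  | .proGlob h => fun w => (h w).holds
  | .oppGlob w h => ⟨w, h.holds⟩

mutual

theorem iWins_pro_of_sat {w : M.W} : ∀ {φ : Form}, sat M w φ → IWins M (.loc .pro w φ)
  | .prop _, h => .proProp h
  | .nom _, h => .proNom h
  | .rel _ _, h => .proRel h
  | .and _ _, ⟨hφ, hψ⟩ => .proAnd (iWins_pro_of_sat hφ) (iWins_pro_of_sat hψ)
  | .or _ _, .inl hφ => .proOrL (iWins_pro_of_sat hφ)
  | .or _ _, .inr hψ => .proOrR (iWins_pro_of_sat hψ)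
  | .imp _ _, .inl hφ => .proImpL (iWins_opp_of_not_sat hφ)
  | .imp _ _, .inr hψ => .proImpR (iWins_pro_of_sat hψ)
  | .neg _, h => .proNeg (iWins_opp_of_not_sat h)
  | .at_ _ _, h => .proAt (iWins_pro_of_sat h)
  | .box _, h => .proBox fun v hv => iWins_pro_of_sat (h v hv)
  | .dia _, ⟨v, hv, hφ⟩ => .proDia v hv (iWins_pro_of_sat hφ)

theorem iWins_opp_of_not_sat {w : M.W} : ∀ {φ : Form}, ¬ sat M w φ → IWins M (.loc .opp w φ)
  | .prop _, h => .oppProp h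
  | .nom _, h => .oppNom h
  | .rel _ _, h => .oppRel h
  | .and _ _, h => (not_and_or.1 h).elim (fun hφ => .oppAndL (iWins_opp_of_not_sat hφ))
      fun hψ => .oppAndR (iWins_opp_of_not_sat hψ)
  | .or _ _, h =>
      have ⟨hφ, hψ⟩ := not_or.1 h
      .oppOr (iWins_opp_of_not_sat hφ) (iWins_opp_of_not_sat hψ)
  | .imp _ _, h =>
      have ⟨hφ, hψ⟩ := not_or.1 h
      .oppImp (iWins_pro_of_sat (not_not.1 hφ)) (iWins_opp_of_not_sat hψ)
  | .neg _, h => .oppNeg (iWins_pro_of_sat (not_not.1 h))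
  | .at_ _ _, h => .oppAt (iWins_opp_of_not_sat h)
  | .box _, h =>
      have ⟨v, hbox⟩ := not_forall.1 h
      have ⟨hv, hφ⟩ := Classical.not_imp.1 hbox
      .oppBox v hv (iWins_opp_of_not_sat hφ)
  | .dia _, h => .oppDia fun v hv => iWins_opp_of_not_sat fun hφ => h ⟨v, hv, hφ⟩

end

theorem GState.Holds.iWins : ∀ {s : GState M}, s.Holds → IWins M s
  | .loc .pro _ _, h => iWins_pro_of_sat h
  | .loc .opp _ _, h => iWins_opp_of_not_sat h
  | .glob .pro _, h => .proGlob fun w => iWins_pro_of_sat (h w)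
  | .glob .opp _, ⟨w, h⟩ => .oppGlob w (iWins_opp_of_not_sat h)

theorem iWins_iff_holds {s : GState M} : IWins M s ↔ s.Holds :=
  ⟨IWins.holds, GState.Holds.iWins⟩

end

/-- (Theorem 1, part 3) I have a winning strategy for `G(M, (P : φ))` iff `M ⊨ φ`,
i.e. `φ` is true at every world of `M`. -/
theorem iWins_glob_iff_true (M : Model) (φ : Form) :
    IWins M (.glob .pro φ) ↔ ∀ w : M.W, sat M w φ :=
  iWins_iff_holds
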